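/- arXiv:2207.11852 — 4 statements merged into one kernel-verified Lean document; each statement's English description precedes it below -/
import Mathlib

section
/- Let G be a finitely generated discrete group acting by homeomorphisms on a compact Hausdorff 0-dimensional space X. If every point of X is regularly almost periodic, i.e. for every x ∈ X and every neighborhood U of x there is a finite-index normal subgroup H of G with H•x ⊆ U, then (G,X) is uniformly regularly almost periodic: for every entourage ε of X there is a finite-index normal subgroup A of G such that (a•x, x) ∈ ε for all a ∈ A and all x ∈ X. -/
open Filter Topology Uniformity

/-!
The heart of the matter is that a clopen equivalence relation `r` on `X` contains an open
`G`-invariant one, `r' x y ↔ ∀ g, r (g • x) (g • y)`. By compactness `r'` then has finitely many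
classes, and the kernel of the action of `G` on `X / r'` moves every point within its `r'`-class.
Zero-dimensionality puts `r` inside a given entourage.

Openness of `r'` says that, for the diagonal action on `X × X` and the clopen set `V` of `r`-related
pairs, membership of the whole orbit of `y` in `V` can be tested on a finite set of group elements
independent of `y`. Suppose `g • y ∉ V` with `g` of minimal word length. Near `g • y` there is a
point `z ∉ V` returning to `Vᶜ` along a finite-index subgroup `H`. Multiplying on the left by one of
finitely many elements of `H` shortens every sufficiently long `g`, and by continuity those elements
keep `g • y` outside `V`; so minimality bounds the length of `g`.
-/

section WordLength

open Pointwise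

variable {M : Type*} [Monoid M] {S : Set M}

/-- The word length of `x` with respect to `S`: the least number of factors in an expression of `x`
as a product of elements of `S` (inverses are not allowed unless they belong to `S`). It has the
junk value `0` outside the submonoid generated by `S`. -/
noncomputable def wordLength (S : Set M) (x : M) : ℕ :=
  sInf {n | x ∈ S ^ n}

theorem wordLength_le_of_mem_pow {x : M} {n : ℕ} (hx : x ∈ S ^ n) : wordLength S x ≤ n :=
  Nat.sInf_le hx

theorem exists_mem_pow_of_mem_closure {x : M} (hx : x ∈ Submonoid.closure S) :
    ∃ n : ℕ, x ∈ S ^ n := by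
  induction hx using Submonoid.closure_induction with
  | mem x hx => exact ⟨1, by rwa [pow_one]⟩
  | one => exact ⟨0, by rw [pow_zero]; exact Set.one_mem_one⟩
  | mul x y _ _ hx hy =>
    obtain ⟨m, hm⟩ := hx
    obtain ⟨n, hn⟩ := hy
    exact ⟨m + n, by rw [pow_add]; exact Set.mul_mem_mul hm hn⟩

theorem mem_pow_wordLength {x : M} (hx : x ∈ Submonoid.closure S) : x ∈ S ^ wordLength S x :=
  Nat.sInf_mem (exists_mem_pow_of_mem_closure hx)

theorem finite_pow_of_finite (hS : S.Finite) (n : ℕ) : (S ^ n).Finite := by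
  induction n with
  | zero => rw [pow_zero]; exact Set.finite_one
  | succ n ih => rw [pow_succ]; exact ih.mul hS

theorem tendsto_wordLength_cofinite_atTop (hS : S.Finite) (hgen : Submonoid.closure S = ⊤) :
    Tendsto (wordLength S) cofinite atTop := by
  rw [← Nat.cofinite_eq_atTop]
  refine .cofinite_of_finite_preimage_singleton fun n => ?_
  refine (finite_pow_of_finite hS n).subset fun x hx => ?_
  rw [← show wordLength S x = n from hx]
  exact mem_pow_wordLength (hgen ▸ Submonoid.mem_top x)

/-- Write `g = u * v` with `u` the prefix of length `C + 1`, where every right coset of `H` has a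
representative of length at most `C`; then replace `u` by the representative of `H u`. -/
theorem exists_finite_subset_eventually_wordLength_mul_lt {G : Type*} [Group G] {S : Set G}
    (hS : S.Finite) (hgen : Submonoid.closure S = ⊤) (H : Subgroup G) [H.FiniteIndex] :
    ∃ F : Set G, F.Finite ∧ F ⊆ H ∧
      ∀ᶠ g in cofinite, ∃ w ∈ F, wordLength S (w * g) < wordLength S g := by
  have mem_pow (g : G) : g ∈ S ^ wordLength S g := mem_pow_wordLength (hgen ▸ Submonoid.mem_top g)
  obtain ⟨T, hT, -⟩ := H.exists_isComplement_right 1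
  obtain ⟨C, hC⟩ := (hT.finite_right.image (wordLength S)).bddAbove
  have rep_le (u : G) : wordLength S (hT.toRightFun u) ≤ C :=
    hC (Set.mem_image_of_mem _ (hT.toRightFun u).2)
  refine ⟨(fun u => (hT.toRightFun u : G) * u⁻¹) '' S ^ (C + 1),
    (finite_pow_of_finite hS _).image _,
    Set.image_subset_iff.2 fun u _ => hT.toRightFun_mul_inv_mem u, ?_⟩
  filter_upwards [(tendsto_wordLength_cofinite_atTop hS hgen).eventually_gt_atTop C] with g hlong
  obtain ⟨k, hk⟩ := Nat.exists_eq_add_of_le (Nat.succ_le_of_lt hlong)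
  obtain ⟨u, hu, v, hv, huv⟩ : g ∈ S ^ (C + 1) * S ^ k := by
    rw [← pow_add, ← hk]
    exact mem_pow g
  set t : G := (hT.toRightFun u).1
  have htg : t * u⁻¹ * g = t * v := by
    rw [← huv, mul_assoc, inv_mul_cancel_left]
  refine ⟨t * u⁻¹, Set.mem_image_of_mem _ hu, ?_⟩
  calc wordLength S (t * u⁻¹ * g) = wordLength S (t * v) := by rw [htg]
    _ ≤ wordLength S t + k :=
      wordLength_le_of_mem_pow (by rw [pow_add]; exact Set.mul_mem_mul (mem_pow t) hv)
    _ ≤ C + k := Nat.add_le_add_right (rep_le u) k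
    _ < wordLength S g := by omega

end WordLength

section RegularlyAlmostPeriodic

variable {G X Y : Type*} [Group G] [TopologicalSpace X] [MulAction G X]
  [TopologicalSpace Y] [MulAction G Y]

/-- A point `x` is regularly almost periodic under `G` if its return times to each of its
neighborhoods contain a finite-index subgroup. Passing to the normal core, one may equivalently
require this subgroup to be normal. -/
def IsRegularlyAlmostPeriodicAt (G : Type*) [Group G] [MulAction G X] (x : X) : Prop :=
  ∀ U ∈ 𝓝 x, ∃ H : Subgroup G, H.FiniteIndex ∧ ∀ h ∈ H, h • x ∈ U

theorem IsRegularlyAlmostPeriodicAt.prodMk {x : X} {y : Y}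
    (hx : IsRegularlyAlmostPeriodicAt G x) (hy : IsRegularlyAlmostPeriodicAt G y) :
    IsRegularlyAlmostPeriodicAt G (x, y) := by
  intro W hW
  obtain ⟨U, hU, V, hV, hUV⟩ := mem_nhds_prod_iff.1 hW
  obtain ⟨H, hH, hHU⟩ := hx U hU
  obtain ⟨K, hK, hKV⟩ := hy V hV
  exact ⟨H ⊓ K, inferInstance, fun h hh => hUV ⟨hHU h hh.1, hKV h hh.2⟩⟩

variable [ContinuousConstSMul G X]

theorem IsRegularlyAlmostPeriodicAt.exists_nhds_eventually_exists_wordLength_lt {S : Set G}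
    (hS : S.Finite) (hgen : Submonoid.closure S = ⊤) {z : X}
    (hz : IsRegularlyAlmostPeriodicAt G z) {U : Set X} (hU : IsOpen U) (hzU : z ∈ U) :
    ∃ N ∈ 𝓝 z, ∀ᶠ g : G in cofinite, ∀ y : X, g • y ∈ N →
      ∃ g' : G, wordLength S g' < wordLength S g ∧ g' • y ∈ U := by
  obtain ⟨H, hH, hHU⟩ := hz U (hU.mem_nhds hzU)
  obtain ⟨F, hF, hFH, hshorten⟩ := exists_finite_subset_eventually_wordLength_mul_lt hS hgen H
  have hN : ⋂ w ∈ F, (w • ·) ⁻¹' U ∈ 𝓝 z := (biInter_mem hF).2 fun w hw =>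
    (hU.preimage (continuous_const_smul w)).mem_nhds (hHU w (hFH hw))
  refine ⟨_, hN, hshorten.mono fun g ⟨w, hw, hlt⟩ y hy => ⟨w * g, hlt, ?_⟩⟩
  rw [mul_smul]
  exact Set.mem_iInter₂.1 hy w hw

variable [Group.FG G] [CompactSpace X]

theorem exists_finite_forall_smul_mem (hX : ∀ x : X, IsRegularlyAlmostPeriodicAt G x) {V : Set X}
    (hV : IsClopen V) :
    ∃ B : Set G, B.Finite ∧ ∀ y : X, (∀ g ∈ B, g • y ∈ V) → ∀ g : G, g • y ∈ V := by
  obtain ⟨S, hgen⟩ := (Group.fg_iff_monoid_fg.1 ‹_›).fg_top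
  choose! N hN hshorten using fun z (hz : z ∈ Vᶜ) =>
    (hX z).exists_nhds_eventually_exists_wordLength_lt S.finite_toSet hgen hV.compl.isOpen hz
  obtain ⟨t, ht, hcover⟩ := hV.compl.isClosed.isCompact.elim_nhds_subcover N hN
  have hcofinite : ∀ᶠ g : G in cofinite, ∀ z ∈ t, ∀ y : X, g • y ∈ N z →
      ∃ g' : G, wordLength S g' < wordLength S g ∧ g' • y ∈ Vᶜ :=
    (eventually_all_finset t).2 fun z hz => hshorten z (ht z hz)
  refine ⟨_, eventually_cofinite.1 hcofinite, fun y hy g => ?_⟩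
  induction hn : wordLength (S : Set G) g using Nat.strong_induction_on generalizing g with
  | _ n ih =>
    by_contra hgy
    obtain ⟨z, hz, hgz⟩ := Set.mem_iUnion₂.1 (hcover hgy)
    obtain ⟨g', hlt, hg'y⟩ := (by_contra fun hgB => hgy (hy g hgB)) z hz y hgz
    exact hg'y (ih _ (hn ▸ hlt) g' rfl)

theorem isOpen_setOf_forall_smul_mem (hX : ∀ x : X, IsRegularlyAlmostPeriodicAt G x) {V : Set X}
    (hV : IsClopen V) : IsOpen {y : X | ∀ g : G, g • y ∈ V} := by
  obtain ⟨B, hB, hBV⟩ := exists_finite_forall_smul_mem hX hV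
  have heq : {y : X | ∀ g : G, g • y ∈ V} = ⋂ g ∈ B, (g • ·) ⁻¹' V :=
    Set.Subset.antisymm (fun y hy => Set.mem_iInter₂.2 fun g _ => hy g)
      fun y hy => hBV y (Set.mem_iInter₂.1 hy)
  rw [heq]
  exact hB.isOpen_biInter fun g _ => hV.isOpen.preimage (continuous_const_smul g)

end RegularlyAlmostPeriodic

theorem exists_normal_finiteIndex_forall_smul_rel {G X : Type*} [Group G] [MulAction G X]
    (r : Setoid X) [Finite (Quotient r)]
    (hr : ∀ (g : G) ⦃x y : X⦄, r x y → r (g • x) (g • y)) :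
    ∃ A : Subgroup G, A.Normal ∧ A.FiniteIndex ∧ ∀ a ∈ A, ∀ x : X, r (a • x) x := by
  let _ : MulAction G (Quotient r) :=
    { smul := fun g => Quotient.map (g • ·) (hr g)
      one_smul := Quotient.ind fun x => congrArg (Quotient.mk r) (one_smul G x)
      mul_smul := fun g h => Quotient.ind fun x => congrArg (Quotient.mk r) (mul_smul g h x) }
  refine ⟨(MulAction.toPermHom G (Quotient r)).ker, inferInstance, inferInstance, fun a ha x => ?_⟩
  exact Quotient.exact (DFunLike.congr_fun (MonoidHom.mem_ker.1 ha) (Quotient.mk r x))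

theorem isClopen_setOf_discreteQuotient_rel {X : Type*} [TopologicalSpace X]
    (S : DiscreteQuotient X) : IsClopen {p : X × X | S.toSetoid p.1 p.2} := by
  have heq : {p : X × X | S.toSetoid p.1 p.2} = Prod.map S.proj S.proj ⁻¹' Set.diagonal S :=
    Set.ext fun _ => Quotient.eq''.symm
  rw [heq]
  exact (isClopen_discrete _).preimage (S.proj_continuous.prodMap S.proj_continuous)

section DiscreteQuotient

variable {G X : Type*} [Group G] [Group.FG G] [TopologicalSpace X] [CompactSpace X]
  [MulAction G X] [ContinuousConstSMul G X]

theorem exists_discreteQuotient_le_forall_smul_rel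
    (hX : ∀ x : X, IsRegularlyAlmostPeriodicAt G x) (S : DiscreteQuotient X) :
    ∃ Q ≤ S, ∀ (g : G) ⦃x y : X⦄, Q.toSetoid x y → Q.toSetoid (g • x) (g • y) := by
  have hopen : IsOpen {p : X × X | ∀ g : G, S.toSetoid (g • p.1) (g • p.2)} :=
    isOpen_setOf_forall_smul_mem (fun p => (hX p.1).prodMk (hX p.2))
      (isClopen_setOf_discreteQuotient_rel S)
  let Q : DiscreteQuotient X :=
    { r := fun x y => ∀ g : G, S.toSetoid (g • x) (g • y)
      iseqv := ⟨fun x g => S.refl (g • x), fun h g => S.symm _ _ (h g),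
        fun h h' g => S.trans _ _ _ (h g) (h' g)⟩
      isOpen_setOfPred_rel := fun x => hopen.preimage (.prodMk_right x) }
  refine ⟨Q, fun x y h => ?_, fun g x y h g' => ?_⟩
  · simpa only [one_smul] using h 1
  · simpa only [mul_smul] using h (g' * g)

theorem exists_normal_finiteIndex_forall_discreteQuotient_rel
    (hX : ∀ x : X, IsRegularlyAlmostPeriodicAt G x) (S : DiscreteQuotient X) :
    ∃ A : Subgroup G, A.Normal ∧ A.FiniteIndex ∧ ∀ a ∈ A, ∀ x : X, S.toSetoid (a • x) x := by
  obtain ⟨Q, hQS, hQ⟩ := exists_discreteQuotient_le_forall_smul_rel hX S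
  obtain ⟨A, hnormal, hindex, hA⟩ := exists_normal_finiteIndex_forall_smul_rel Q.toSetoid hQ
  exact ⟨A, hnormal, hindex, fun a ha x => hQS (hA a ha x)⟩

end DiscreteQuotient

theorem exists_discreteQuotient_subset_uniformity {X : Type*} [UniformSpace X] [CompactSpace X]
    (h0dim : ∀ x : X, ∀ U ∈ 𝓝 x, ∃ V : Set X, IsClopen V ∧ x ∈ V ∧ V ⊆ U)
    {ε : Set (X × X)} (hε : ε ∈ 𝓤 X) :
    ∃ S : DiscreteQuotient X, ∀ x y, S.toSetoid x y → (x, y) ∈ ε := by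
  have hsmall (x : X) : ∃ D : Set X, IsClopen D ∧ x ∈ D ∧ D ×ˢ D ⊆ ε := by
    have hx : ε ∈ 𝓝 x ×ˢ 𝓝 x := nhds_prod_eq (x := x) (y := x) ▸ nhds_le_uniformity x hε
    obtain ⟨U, hU, hUε⟩ := mem_prod_same_iff.1 hx
    obtain ⟨D, hD, hxD, hDU⟩ := h0dim x U hU
    exact ⟨D, hD, hxD, (Set.prod_mono hDU hDU).trans hUε⟩
  choose D hD hxD hDε using hsmall
  obtain ⟨t, ht⟩ := CompactSpace.elim_nhds_subcover D fun x => (hD x).isOpen.mem_nhds (hxD x)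
  refine ⟨t.inf fun i => .ofIsClopen (hD i), fun x y hxy => ?_⟩
  obtain ⟨i, hi, hxi⟩ := Set.mem_iUnion₂.1 (ht.symm ▸ Set.mem_univ x : x ∈ ⋃ i ∈ t, D i)
  have hiff : x ∈ D i ↔ y ∈ D i :=
    Finset.inf_le (f := fun i => DiscreteQuotient.ofIsClopen (hD i)) hi hxy
  exact hDε i ⟨hxi, hiff.1 hxi⟩

theorem statement12_general {G X : Type*} [Group G] [Group.FG G]
    [UniformSpace X] [CompactSpace X] [MulAction G X] [ContinuousConstSMul G X]
    (h0dim : ∀ x : X, ∀ U ∈ 𝓝 x, ∃ V : Set X, IsClopen V ∧ x ∈ V ∧ V ⊆ U)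
    (hrap : ∀ x : X, IsRegularlyAlmostPeriodicAt G x) :
    ∀ ε ∈ 𝓤 X, ∃ A : Subgroup G, A.Normal ∧ A.FiniteIndex ∧
      ∀ a ∈ A, ∀ x : X, (a • x, x) ∈ ε := by
  intro ε hε
  obtain ⟨S, hSε⟩ := exists_discreteQuotient_subset_uniformity h0dim hε
  obtain ⟨A, hnormal, hindex, hA⟩ := exists_normal_finiteIndex_forall_discreteQuotient_rel hrap S
  exact ⟨A, hnormal, hindex, fun a ha x => hSε _ _ (hA a ha x)⟩

/-- a pointwise regularly almost periodic action of a finitely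
generated discrete group on a compact Hausdorff 0-dimensional space is uniformly
regularly almost periodic. -/
theorem statement12 {G X : Type} [Group G] [Group.FG G]
    [UniformSpace X] [CompactSpace X] [T2Space X]
    [MulAction G X] [ContinuousConstSMul G X]
    (h0dim : ∀ x : X, ∀ U ∈ 𝓝 x, ∃ V : Set X, IsClopen V ∧ x ∈ V ∧ V ⊆ U)
    (hrap : ∀ x : X, ∀ U ∈ 𝓝 x, ∃ H : Subgroup G, H.Normal ∧ H.FiniteIndex ∧
      ∀ h ∈ H, h • x ∈ U) :
    ∀ ε ∈ 𝓤 X, ∃ A : Subgroup G, A.Normal ∧ A.FiniteIndex ∧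
      ∀ a ∈ A, ∀ x : X, (a • x, x) ∈ ε :=
  statement12_general h0dim fun x U hU =>
    let ⟨H, _, hindex, hH⟩ := hrap x U hU
    ⟨H, hindex, hH⟩
end

section
/- Let (G,X) be a flow and A a syndetic normal subgroup of G, i.e. A ⊴ G and K⁻¹A = G for some compact K ⊆ G. Then every point of X is almost periodic for the G-action if and only if every point of X is almost periodic for the restricted A-action, where x is almost periodic for the A-action if for every neighborhood U of x there is a compact set K' ⊆ A with A ⊆ K'⁻¹·{a ∈ A | a•x ∈ U}. -/
open Pointwise Filter Topology

/-!
For `x` almost periodic under `G` with compact orbit closure `Y`, choose an `A`-minimal set `M ⊆ Y`.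
Birkhoff's theorem makes every point of `M` almost periodic under `A`. Almost periodicity of `x`
puts `x` in the `G`-orbit closure of each point of `M`, and since `A` is syndetic this forces
`k • x ∈ M` for some `k`. Finally, normality of `A` lets conjugation by `k` carry almost periodicity
from `k • x` back to `x`. In the other direction, a syndetic subset of a syndetic subgroup is
syndetic in the whole group.
-/

section Syndetic

variable {G : Type*} [Group G] [TopologicalSpace G]

/-- A set `S` is syndetic if, for some compact `K`, the translates `k⁻¹ • S` with `k ∈ K` cover the
group. As inversion need not be continuous, `K⁻¹` need not be compact. -/
def IsSyndetic (S : Set G) : Prop :=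
  ∃ K : Set G, IsCompact K ∧ K⁻¹ * S = Set.univ

lemma isSyndetic_iff {S : Set G} :
    IsSyndetic S ↔ ∃ K : Set G, IsCompact K ∧ ∀ g, ∃ k ∈ K, k * g ∈ S := by
  simp only [IsSyndetic, Set.eq_univ_iff_forall, Set.mem_mul, Set.mem_inv]
  refine exists_congr fun K ↦ and_congr_right fun _ ↦ forall_congr' fun g ↦ ⟨?_, ?_⟩
  · rintro ⟨k, hk, s, hs, rfl⟩
    exact ⟨k⁻¹, hk, by rwa [inv_mul_cancel_left]⟩
  · rintro ⟨k, hk, hkg⟩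
    exact ⟨k⁻¹, by rwa [inv_inv], k * g, hkg, inv_mul_cancel_left k g⟩

lemma IsSyndetic.mono {S T : Set G} (hS : IsSyndetic S) (hST : S ⊆ T) : IsSyndetic T := by
  obtain ⟨K, hK, hKS⟩ := isSyndetic_iff.1 hS
  exact isSyndetic_iff.2 ⟨K, hK, fun g ↦ (hKS g).imp fun _ h ↦ ⟨h.1, hST h.2⟩⟩

lemma IsSyndetic.image_val [ContinuousMul G] {A : Subgroup G} {S : Set A} (hS : IsSyndetic S)
    (hA : IsSyndetic (A : Set G)) : IsSyndetic (Subtype.val '' S) := by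
  obtain ⟨K, hK, hKA⟩ := isSyndetic_iff.1 hA
  obtain ⟨L, hL, hLS⟩ := isSyndetic_iff.1 hS
  have hLK : IsCompact (Subtype.val '' L * K) := (hL.image continuous_subtype_val).mul hK
  refine isSyndetic_iff.2 ⟨Subtype.val '' L * K, hLK, fun g ↦ ?_⟩
  obtain ⟨k, hk, hkg⟩ := hKA g
  obtain ⟨l, hl, hlS⟩ := hLS ⟨k * g, hkg⟩
  exact ⟨l * k, Set.mul_mem_mul (Set.mem_image_of_mem _ hl) hk, _, hlS, (mul_assoc _ _ _).symm⟩

lemma isSyndetic_subgroup_iff {A : Subgroup G} {S : Set A} :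
    IsSyndetic S ↔ ∃ K : Set G, K ⊆ (A : Set G) ∧ IsCompact K ∧
      (A : Set G) ⊆ K⁻¹ * (Subtype.val '' S) := by
  constructor
  · rintro ⟨K, hK, hKS⟩
    refine ⟨Subtype.val '' K, Subtype.coe_image_subset _ K, hK.image continuous_subtype_val, ?_⟩
    intro a ha
    obtain ⟨k, hk, s, hs, hks⟩ : (⟨a, ha⟩ : A) ∈ K⁻¹ * S := hKS ▸ Set.mem_univ _
    exact ⟨k, ⟨k⁻¹, hk, rfl⟩, s, Set.mem_image_of_mem _ hs, congrArg Subtype.val hks⟩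
  · rintro ⟨K, hKA, hK, hKS⟩
    refine ⟨Subtype.val ⁻¹' K, IsInducing.subtypeVal.isCompact_preimage' hK (by simpa using hKA),
      Set.eq_univ_of_forall fun a ↦ ?_⟩
    obtain ⟨k, hk, _, ⟨s, hs, rfl⟩, hks⟩ := hKS a.2
    have hkA : k ∈ A := inv_mem_iff.1 (hKA hk)
    exact ⟨⟨k, hkA⟩, hk, s, hs, Subtype.ext hks⟩

end Syndetic

lemma isClosed_setOf_exists_smul_mem {G X : Type*} [TopologicalSpace G] [TopologicalSpace X]
    [SMul G X] [ContinuousSMul G X] {K : Set G} (hK : IsCompact K) {C : Set X} (hC : IsClosed C) :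
    IsClosed {y : X | ∃ k ∈ K, k • y ∈ C} := by
  have : CompactSpace K := isCompact_iff_compactSpace.1 hK
  have hgraph : IsClosed {p : K × X | (p.1 : G) • p.2 ∈ C} := hC.preimage (by fun_prop)
  convert isClosedMap_snd_of_compactSpace _ hgraph using 1
  ext y
  simp

lemma IsSyndetic.exists_smul_mem_of_mem_closure_orbit {G X : Type*} [Group G] [TopologicalSpace G]
    [TopologicalSpace X] [MulAction G X] [ContinuousSMul G X] {x y : X} {C : Set X}
    (hsynd : IsSyndetic {g : G | g • x ∈ C}) (hC : IsClosed C)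
    (hy : y ∈ closure (MulAction.orbit G x)) : ∃ g : G, g • y ∈ C := by
  obtain ⟨K, hK, hKC⟩ := isSyndetic_iff.1 hsynd
  have horbit : MulAction.orbit G x ⊆ {z | ∃ k ∈ K, k • z ∈ C} := by
    rintro _ ⟨g, rfl⟩
    simpa only [Set.mem_ofPred_eq, smul_smul] using hKC g
  obtain ⟨k, -, hk⟩ := closure_minimal horbit (isClosed_setOf_exists_smul_mem hK hC) hy
  exact ⟨k, hk⟩

section Subflow

/-- A nonempty closed invariant set. The minimal sets of topological dynamics are the sets `M`
with `Minimal (IsSubflow G) M`. -/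
structure IsSubflow (G : Type*) {X : Type*} [SMul G X] [TopologicalSpace X] (Y : Set X) : Prop where
  nonempty : Y.Nonempty
  isClosed : IsClosed Y
  smul_subset (g : G) : g • Y ⊆ Y

namespace IsSubflow

variable {G X : Type*} [TopologicalSpace X]

lemma smul_mem [SMul G X] {Y : Set X} (hY : IsSubflow G Y) (g : G) {y : X} (hy : y ∈ Y) :
    g • y ∈ Y :=
  hY.smul_subset g (Set.smul_mem_smul_set hy)

lemma restrict_subgroup [Group G] [MulAction G X] {Y : Set X} (hY : IsSubflow G Y)
    (A : Subgroup G) : IsSubflow A Y :=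
  ⟨hY.nonempty, hY.isClosed, fun a ↦ hY.smul_subset (a : G)⟩

lemma closure_orbit (G : Type*) [Monoid G] [MulAction G X] [ContinuousConstSMul G X] (x : X) :
    IsSubflow G (closure (MulAction.orbit G x)) :=
  ⟨(MulAction.nonempty_orbit x).closure, isClosed_closure, fun g ↦ smul_closure_orbit_subset g x⟩

lemma closure_orbit_subset [Monoid G] [MulAction G X] {Y : Set X} (hY : IsSubflow G Y) {y : X}
    (hy : y ∈ Y) : closure (MulAction.orbit G y) ⊆ Y :=
  closure_minimal (Set.range_subset_iff.2 fun g ↦ hY.smul_mem g hy) hY.isClosed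

lemma sInter_of_isChain [SMul G X] {c : Set (Set X)} (hc : ∀ Y ∈ c, IsSubflow G Y)
    (hcompact : ∀ Y ∈ c, IsCompact Y) (hchain : IsChain (· ⊆ ·) c) (hne : c.Nonempty) :
    IsSubflow G (⋂₀ c) where
  nonempty :=
    have := hne.to_subtype
    IsCompact.nonempty_sInter_of_directed_nonempty_isCompact_isClosed
      (show IsChain (· ⊇ ·) c from hchain.symm).directedOn
      (fun Y hY ↦ (hc Y hY).nonempty) hcompact fun Y hY ↦ (hc Y hY).isClosed
  isClosed := isClosed_sInter fun Y hY ↦ (hc Y hY).isClosed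
  smul_subset g := Set.subset_sInter fun Y hY ↦
    (Set.smul_set_mono (Set.sInter_subset_of_mem hY)).trans ((hc Y hY).smul_subset g)

lemma exists_minimal_subset [SMul G X] {Y : Set X} (hY : IsSubflow G Y) (hcompact : IsCompact Y) :
    ∃ M ⊆ Y, Minimal (IsSubflow G) M := by
  have hchain_bound : ∀ c ⊆ {Z | IsSubflow G Z ∧ Z ⊆ Y}, IsChain (· ⊆ ·) c → c.Nonempty →
      ∃ Z ∈ {Z | IsSubflow G Z ∧ Z ⊆ Y}, ∀ s ∈ c, Z ⊆ s := by
    intro c hc hchain hne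
    have hsub : IsSubflow G (⋂₀ c) := sInter_of_isChain (fun Z hZ ↦ (hc hZ).1)
      (fun Z hZ ↦ hcompact.of_isClosed_subset (hc hZ).1.isClosed (hc hZ).2) hchain hne
    obtain ⟨Z, hZ⟩ := hne
    exact ⟨⋂₀ c, ⟨hsub, (Set.sInter_subset_of_mem hZ).trans (hc hZ).2⟩,
      fun _ ↦ Set.sInter_subset_of_mem⟩
  obtain ⟨M, hMY, hM⟩ := zorn_superset_nonempty _ hchain_bound Y ⟨hY, subset_rfl⟩
  exact ⟨M, hMY, hM.prop.1, fun Z hZ hZM ↦ hM.le_of_le ⟨hZ, hZM.trans hMY⟩ hZM⟩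

lemma closure_orbit_eq_of_minimal [Monoid G] [MulAction G X] [ContinuousConstSMul G X] {M : Set X}
    (hM : Minimal (IsSubflow G) M) {x : X} (hx : x ∈ M) : closure (MulAction.orbit G x) = M :=
  hM.eq_of_subset (closure_orbit G x) (hM.prop.closure_orbit_subset hx)

end IsSubflow

end Subflow

section AlmostPeriodic

/-- A point is almost periodic if its return times to each of its neighbourhoods form a syndetic
set. For a subgroup `A`, almost periodicity under `A` is `IsAlmostPeriodic A x`, where `A` carries
the subspace topology. -/
def IsAlmostPeriodic (G : Type*) {X : Type*} [Group G] [TopologicalSpace G] [TopologicalSpace X]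
    [MulAction G X] (x : X) : Prop :=
  ∀ U ∈ 𝓝 x, IsSyndetic {g : G | g • x ∈ U}

variable {G X : Type*} [Group G] [TopologicalSpace G] [TopologicalSpace X] [MulAction G X] {x : X}

lemma isAlmostPeriodic_subgroup_iff {A : Subgroup G} :
    IsAlmostPeriodic A x ↔ ∀ U ∈ 𝓝 x, ∃ K : Set G, K ⊆ (A : Set G) ∧ IsCompact K ∧
      (A : Set G) ⊆ K⁻¹ * {a : G | a ∈ A ∧ a • x ∈ U} := by
  have himage (U : Set X) :
      Subtype.val '' {a : A | a • x ∈ U} = {a : G | a ∈ A ∧ a • x ∈ U} := by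
    ext a
    simp [Subgroup.smul_def, and_comm]
  simp only [IsAlmostPeriodic, isSyndetic_subgroup_iff, himage]

lemma IsAlmostPeriodic.of_subgroup [ContinuousMul G] {A : Subgroup G} (hx : IsAlmostPeriodic A x)
    (hA : IsSyndetic (A : Set G)) : IsAlmostPeriodic G x := fun U hU ↦
  ((hx U hU).image_val hA).mono (Set.image_subset_iff.2 fun _ ha ↦ ha)

lemma IsAlmostPeriodic.mem_closure_orbit [RegularSpace X] [ContinuousSMul G X] {y : X}
    (hx : IsAlmostPeriodic G x) (hy : y ∈ closure (MulAction.orbit G x)) :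
    x ∈ closure (MulAction.orbit G y) := by
  refine (mem_closure_iff_nhds_basis (closed_nhds_basis x)).2 fun C ⟨hCx, hC⟩ ↦ ?_
  obtain ⟨g, hg⟩ := (hx C hCx).exists_smul_mem_of_mem_closure_orbit hC hy
  exact ⟨g • y, MulAction.mem_orbit y g, hg⟩

/- Birkhoff: every orbit in `M` enters `U`, and by compactness it does so within a finite set of
times that works for all points of `M` at once. -/
lemma isAlmostPeriodic_of_mem_minimal [ContinuousConstSMul G X] {M : Set X}
    (hM : Minimal (IsSubflow G) M) (hcompact : IsCompact M) (hx : x ∈ M) :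
    IsAlmostPeriodic G x := by
  intro U hU
  have hcover : M ⊆ ⋃ g : G, {z | g • z ∈ interior U} := by
    intro z hz
    have hxz : x ∈ closure (MulAction.orbit G z) :=
      (IsSubflow.closure_orbit_eq_of_minimal hM hz).symm ▸ hx
    obtain ⟨_, hgU, g, rfl⟩ := mem_closure_iff_nhds.1 hxz _ (interior_mem_nhds.2 hU)
    exact Set.mem_iUnion.2 ⟨g, hgU⟩
  obtain ⟨t, ht⟩ := hcompact.elim_finite_subcover _
    (fun g : G ↦ isOpen_interior.preimage (continuous_const_smul g)) hcover
  refine isSyndetic_iff.2 ⟨t, t.finite_toSet.isCompact, fun g ↦ ?_⟩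
  obtain ⟨k, hk, hkU⟩ := Set.mem_iUnion₂.1 (ht (hM.prop.smul_mem g hx))
  exact ⟨k, hk, by simpa only [Set.mem_ofPred_eq, mul_smul] using interior_subset hkU⟩

lemma IsAlmostPeriodic.of_smul [SeparatelyContinuousMul G] [ContinuousConstSMul G X]
    {A : Subgroup G} [A.Normal] {g : G} (hx : IsAlmostPeriodic A (g • x)) :
    IsAlmostPeriodic A x := by
  intro U hU
  have hgU : (g⁻¹ • ·) ⁻¹' U ∈ 𝓝 (g • x) :=
    (continuous_const_smul g⁻¹).continuousAt.preimage_mem_nhds (by rwa [inv_smul_smul])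
  obtain ⟨K, hK, hKU⟩ := isSyndetic_iff.1 (hx _ hgU)
  have hconj : Continuous (MulAut.conjNormal g⁻¹ : A → A) :=
    continuous_induced_rng.2 <| by
      simp only [Function.comp_def, MulAut.conjNormal_apply]
      fun_prop
  refine isSyndetic_iff.2 ⟨MulAut.conjNormal g⁻¹ '' K, hK.image hconj, fun a ↦ ?_⟩
  obtain ⟨k, hk, hkU⟩ := hKU (MulAut.conjNormal g a)
  refine ⟨_, Set.mem_image_of_mem _ hk, ?_⟩
  simpa [Subgroup.smul_def, smul_smul, mul_assoc] using hkU

lemma IsAlmostPeriodic.restrict_subgroup [SeparatelyContinuousMul G] [RegularSpace X]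
    [ContinuousSMul G X] {A : Subgroup G} [A.Normal] (hx : IsAlmostPeriodic G x)
    (hA : IsSyndetic (A : Set G)) (hcompact : IsCompact (closure (MulAction.orbit G x))) :
    IsAlmostPeriodic A x := by
  obtain ⟨M, hMx, hM⟩ :=
    ((IsSubflow.closure_orbit G x).restrict_subgroup A).exists_minimal_subset hcompact
  obtain ⟨m, hm⟩ := hM.prop.nonempty
  have hreturn : IsSyndetic {g : G | g • m ∈ M} := hA.mono fun a ha ↦ hM.prop.smul_mem ⟨a, ha⟩ hm
  obtain ⟨k, hk⟩ := hreturn.exists_smul_mem_of_mem_closure_orbit hM.prop.isClosed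
    (hx.mem_closure_orbit (hMx hm))
  have hMcompact : IsCompact M := hcompact.of_isClosed_subset hM.prop.isClosed hMx
  exact (isAlmostPeriodic_of_mem_minimal hM hMcompact hk).of_smul

end AlmostPeriodic

theorem statement15_general {G X : Type*} [Group G] [TopologicalSpace G] [ContinuousMul G]
    [TopologicalSpace X] [RegularSpace X] [MulAction G X] [ContinuousSMul G X]
    {A : Subgroup G} [A.Normal] (hA : IsSyndetic (A : Set G))
    {x : X} (hcompact : IsCompact (closure (MulAction.orbit G x))) :
    IsAlmostPeriodic G x ↔ IsAlmostPeriodic A x :=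
  ⟨fun hx ↦ hx.restrict_subgroup hA hcompact, fun hx ↦ hx.of_subgroup hA⟩

/-- for a flow `(G,X)` and a syndetic normal subgroup `A` of `G`,
every point is almost periodic for the `G`-action iff every point is almost
periodic for the restricted `A`-action. -/
theorem statement15 {G X : Type} [Group G] [TopologicalSpace G] [T2Space G]
    [ContinuousMul G] [UniformSpace X] [T2Space X] [LocallyCompactSpace X]
    [MulAction G X] [ContinuousSMul G X]
    (hLag : ∀ x : X, IsCompact (closure (MulAction.orbit G x)))
    (A : Subgroup G) (hnorm : A.Normal)
    (hsynd : ∃ K : Set G, IsCompact K ∧ K⁻¹ * (A : Set G) = Set.univ) :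
    (∀ x : X, ∀ U ∈ 𝓝 x,
        ∃ K : Set G, IsCompact K ∧ K⁻¹ * {g : G | g • x ∈ U} = Set.univ) ↔
      (∀ x : X, ∀ U ∈ 𝓝 x, ∃ K' : Set G, K' ⊆ (A : Set G) ∧ IsCompact K' ∧
        (A : Set G) ⊆ K'⁻¹ * {a : G | a ∈ A ∧ a • x ∈ U}) :=
  forall_congr' fun x ↦ (statement15_general hsynd (hLag x)).trans isAlmostPeriodic_subgroup_iff
end

section
/- Let T be a group, S a subgroup of T, and Γ ⊆ T a subset with e ∈ Γ = Γ⁻¹ and T = Γ·S. Put Ψ = Γ³ ∩ S. Then Γⁿ ∩ S ⊆ Ψⁿ for every integer n ≥ 1. -/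
open Pointwise

/-!
Schreier rewriting: since `T = Γ·S` and `Γ = Γ⁻¹`, also `T = S·Γ`, so a
product `a * b` of two elements of `Γ` equals `s * c` with `s ∈ S` and `c ∈ Γ`; here
`s = a * b * c⁻¹` lies in `Ψ`. Hence `Γ² ⊆ Ψ·Γ`, and pushing the remainder to the right gives
`Γⁿ ⊆ Ψⁿ⁻¹·Γ`. If the product lies in `S`, so does its last factor `d ∈ Γ`, and
`d = d * d * d⁻¹` lies in `Ψ` too.
-/

section

variable {G : Type*} [Group G]

lemma subset_mul_inv_inter_mul {A B C : Set G} (h : A ⊆ C * B) :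
    A ⊆ (A * B⁻¹ ∩ C) * B := by
  intro a ha
  obtain ⟨c, hc, b, hb, rfl⟩ := h ha
  have c_mem : c ∈ A * B⁻¹ := by
    simpa only [mul_inv_cancel_right] using Set.mul_mem_mul ha (Set.inv_mem_inv.mpr hb)
  exact Set.mul_mem_mul ⟨c_mem, hc⟩ hb

lemma mul_inter_subgroup_subset {A : Set G} (B : Set G) {H : Subgroup G}
    (hA : A ⊆ (H : Set G)) : A * B ∩ (H : Set G) ⊆ A * (B ∩ (H : Set G)) := by
  rintro _ ⟨⟨a, ha, b, hb, rfl⟩, hab⟩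
  exact Set.mul_mem_mul ha ⟨hb, (H.mul_mem_cancel_left (hA ha)).mp hab⟩

lemma subset_sq_mul_inv (A : Set G) : A ⊆ A ^ 2 * A⁻¹ := by
  intro a ha
  simpa only [sq, mul_inv_cancel_right] using
    Set.mul_mem_mul (Set.pow_mem_pow (n := 2) ha) (Set.inv_mem_inv.mpr ha)

end

theorem statement16_general {T : Type*} [Group T] (S : Subgroup T) (Γ : Set T)
    (hΓ : Γ ^ 2 ⊆ (S : Set T) * Γ) (n : ℕ) :
    Γ ^ n ∩ (S : Set T) ⊆ (Γ ^ 2 * Γ⁻¹ ∩ (S : Set T)) ^ n := by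
  obtain rfl | hn := eq_or_ne n 0
  · simp only [pow_zero, Set.inter_subset_left]
  set Ψ : Set T := Γ ^ 2 * Γ⁻¹ ∩ (S : Set T)
  have sq_subset : Γ ^ 2 ⊆ Ψ * Γ := subset_mul_inv_inter_mul hΓ
  have pow_subset : Ψ ^ (n - 1) ⊆ (S : Set T) := Subgroup.pow_subset Set.inter_subset_right
  calc Γ ^ n ∩ (S : Set T)
      ⊆ Ψ ^ (n - 1) * Γ ∩ (S : Set T) :=
        Set.inter_subset_inter_left _ (Set.pow_subset_pow_mul_of_sq_subset_mul sq_subset hn)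
    _ ⊆ Ψ ^ (n - 1) * (Γ ∩ (S : Set T)) := mul_inter_subgroup_subset Γ pow_subset
    _ ⊆ Ψ ^ (n - 1) * Ψ :=
        Set.mul_subset_mul_left (Set.inter_subset_inter_left _ (subset_sq_mul_inv Γ))
    _ = Ψ ^ n := pow_sub_one_mul hn Ψ

/-- if `T = Γ·S` with `e ∈ Γ = Γ⁻¹` and `Ψ = Γ³ ∩ S`, then
`Γⁿ ∩ S ⊆ Ψⁿ` for every `n ≥ 1`. -/
theorem statement16 {T : Type*} [Group T] (S : Subgroup T) (Γ : Set T)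
    (h1 : (1 : T) ∈ Γ) (hinv : Γ⁻¹ = Γ) (hcov : Γ * (S : Set T) = Set.univ) :
    ∀ n : ℕ, 1 ≤ n → Γ ^ n ∩ (S : Set T) ⊆ (Γ ^ 3 ∩ (S : Set T)) ^ n := by
  intro n _
  have hcov' : (S : Set T) * Γ = Set.univ := by
    simpa only [mul_inv_rev, inv_coe_set, hinv, Set.inv_univ] using congrArg (·⁻¹) hcov
  simpa only [hinv, ← pow_succ] using
    statement16_general S Γ (hcov' ▸ Set.subset_univ _) n
end

section
/- A flow (G,X) is locally weakly almost periodic with G discrete if and only if the orbit closure mapping x ↦ closure(G•x) is upper semicontinuous. -/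
open Pointwise Filter Topology

/-!
Suppose `(G, X)` is locally weakly almost periodic, and let `F`, `V` be given by the definition for
a closed neighborhood `N` of `z`. Moving back from `V` along an orbit shows that any `y` whose orbit
meets `V` lies in the closed set `⋃ f ∈ F, f⁻¹ • N`. Hence the relation `z ∈ closure (G • x)` is
closed in `X × X`. Local compactness confines the orbits of all points near `x` to one compact set,
and a set-valued map with closed graph and values in a compact set is upper semicontinuous, that is,
`UpperHemicontinuous`.

Conversely, upper semicontinuity makes the relation `y ∈ closure (G • x)` symmetric. Hence the orbit
of every point of the compact set `closure (G • x)` enters a given open neighborhood `U` of `x`, so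
finitely many translates of `U` cover `closure (G • x)`. By upper semicontinuity they contain the
orbits of all points near `x`.
-/

theorem upperHemicontinuousAt_of_isClosed_graph {α β : Type*} [TopologicalSpace α]
    [TopologicalSpace β] {f : α → Set β} {x : α} {K : Set β}
    (hK : IsCompact K) (hfK : ∀ᶠ y in 𝓝 x, f y ⊆ K)
    (hgraph : IsClosed {p : α × β | p.2 ∈ f p.1}) : UpperHemicontinuousAt f x := by
  refine .of_forall_isOpen fun u hu hxu ↦ ?_
  have havoid : ∀ᶠ y in 𝓝 x, ∀ z ∈ K \ u, z ∉ f y :=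
    (hK.diff hu).eventually_forall_of_forall_eventually fun z hz ↦
      hgraph.isOpen_compl.mem_nhds fun hzx ↦ hz.2 (hxu hzx)
  filter_upwards [hfK, havoid] with y hyK hy z hz
  by_contra hzu
  exact hy z ⟨hyK hz, hzu⟩ hz

theorem exists_finset_subset_iUnion_preimage_smul {M X : Type*} [SMul M X]
    [TopologicalSpace X] [ContinuousConstSMul M X] {K U : Set X} (hK : IsCompact K)
    (hU : IsOpen U) (hKU : ∀ y ∈ K, (U ∩ MulAction.orbit M y).Nonempty) :
    ∃ F : Finset M, K ⊆ ⋃ f ∈ F, (f • · : X → X) ⁻¹' U := by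
  refine hK.elim_finite_subcover _ (fun g ↦ hU.preimage (continuous_const_smul g)) fun y hy ↦ ?_
  obtain ⟨_, hgU, g, rfl⟩ := hKU y hy
  exact Set.mem_iUnion.2 ⟨g, hgU⟩

/-- Local weak almost periodicity of an action of `G` on `X`, where `G` is regarded as a discrete
group: the returns of all orbits starting near `x` to a neighborhood `U` of `x` are controlled by a
finite set `F`, in the sense that `G • V ⊆ F⁻¹ • U`. -/
def IsLocallyWeaklyAlmostPeriodic (G X : Type*) [SMul G X] [TopologicalSpace X] : Prop :=
  ∀ x : X, ∀ U ∈ 𝓝 x, ∃ F : Finset G, ∃ V ∈ 𝓝 x, ∀ g : G, ∀ v ∈ V, ∃ f ∈ F, f • g • v ∈ U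

section Action

variable {G X : Type*} [Group G] [TopologicalSpace X] [MulAction G X]

theorem mem_closure_orbit_symm_of_upperHemicontinuous [RegularSpace X]
    (h : UpperHemicontinuous fun x : X ↦ closure (MulAction.orbit G x)) {x y : X}
    (hy : y ∈ closure (MulAction.orbit G x)) : x ∈ closure (MulAction.orbit G y) := by
  have hfreq : ∃ᶠ w in 𝓝 y, x ∈ closure (MulAction.orbit G w) :=
    (mem_closure_iff_frequently.1 hy).mono fun _ hw ↦
      subset_closure (MulAction.mem_orbit_symm.1 hw)
  exact (h.upperHemicontinuousAt y).mem_of_tendsto isClosed_closure tendsto_id hfreq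
    tendsto_const_nhds

variable [ContinuousConstSMul G X]

namespace IsLocallyWeaklyAlmostPeriodic

theorem isClosed_setOf_mem_closure_orbit [RegularSpace X]
    (h : IsLocallyWeaklyAlmostPeriodic G X) :
    IsClosed {p : X × X | p.2 ∈ closure (MulAction.orbit G p.1)} := by
  refine isClosed_iff_frequently.2 fun ⟨x, z⟩ hxz ↦ ?_
  refine (mem_closure_iff_nhds_basis (closed_nhds_basis z)).2 fun N ⟨hNz, hN⟩ ↦ ?_
  obtain ⟨F, V, hV, hF⟩ := h z N hNz
  have hclosed : IsClosed (⋃ f ∈ F, (f • · : X → X) ⁻¹' N) :=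
    F.finite_toSet.isClosed_biUnion fun f _ ↦ hN.preimage (continuous_const_smul f)
  have hfreq : ∃ᶠ p : X × X in 𝓝 (x, z), p.1 ∈ ⋃ f ∈ F, (f • · : X → X) ⁻¹' N := by
    have hVnear : ∀ᶠ p : X × X in 𝓝 (x, z), V ∈ 𝓝 p.2 :=
      continuousAt_snd.eventually (eventually_mem_nhds_iff.2 hV)
    refine (hxz.and_eventually hVnear).mono fun ⟨y, w⟩ ⟨hw, hVw⟩ ↦ ?_
    obtain ⟨_, hgV, g, rfl⟩ := mem_closure_iff_nhds.1 hw V hVw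
    obtain ⟨f, hf, hfN⟩ := hF g⁻¹ _ hgV
    rw [inv_smul_smul] at hfN
    exact Set.mem_biUnion hf hfN
  obtain ⟨f, -, hfN⟩ :=
    Set.mem_iUnion₂.1 (hclosed.mem_of_frequently_of_tendsto hfreq continuousAt_fst)
  exact ⟨f • x, MulAction.mem_orbit x f, hfN⟩

theorem exists_isCompact_eventually_closure_orbit_subset [R1Space X] [WeaklyLocallyCompactSpace X]
    (h : IsLocallyWeaklyAlmostPeriodic G X) (x : X) :
    ∃ K : Set X, IsCompact K ∧ ∀ᶠ y in 𝓝 x, closure (MulAction.orbit G y) ⊆ K := by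
  obtain ⟨C, hC, hCx⟩ := exists_compact_mem_nhds x
  obtain ⟨F, V, hV, hF⟩ := h x C hCx
  refine ⟨closure (⋃ f ∈ F, f⁻¹ • C), (F.isCompact_biUnion fun f _ ↦ hC.smul f⁻¹).closure, ?_⟩
  filter_upwards [hV] with y hy
  refine closure_mono (Set.range_subset_iff.2 fun g ↦ ?_)
  obtain ⟨f, hf, hfC⟩ := hF g y hy
  exact Set.mem_biUnion hf (Set.mem_inv_smul_set_iff.2 hfC)

theorem isCompact_closure_orbit [R1Space X] [WeaklyLocallyCompactSpace X]
    (h : IsLocallyWeaklyAlmostPeriodic G X) (x : X) :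
    IsCompact (closure (MulAction.orbit G x)) :=
  let ⟨_, hK, hxK⟩ := h.exists_isCompact_eventually_closure_orbit_subset x
  hK.of_isClosed_subset isClosed_closure hxK.self_of_nhds

theorem upperHemicontinuous_closure_orbit [R1Space X] [WeaklyLocallyCompactSpace X]
    (h : IsLocallyWeaklyAlmostPeriodic G X) :
    UpperHemicontinuous fun x : X ↦ closure (MulAction.orbit G x) := fun x ↦
  let ⟨_, hK, hxK⟩ := h.exists_isCompact_eventually_closure_orbit_subset x
  upperHemicontinuousAt_of_isClosed_graph hK hxK h.isClosed_setOf_mem_closure_orbit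

end IsLocallyWeaklyAlmostPeriodic

theorem isLocallyWeaklyAlmostPeriodic_of_upperHemicontinuous [RegularSpace X]
    (hcompact : ∀ x : X, IsCompact (closure (MulAction.orbit G x)))
    (h : UpperHemicontinuous fun x : X ↦ closure (MulAction.orbit G x)) :
    IsLocallyWeaklyAlmostPeriodic G X := by
  intro x U hU
  have hreturn : ∀ y ∈ closure (MulAction.orbit G x),
      (interior U ∩ MulAction.orbit G y).Nonempty := fun y hy ↦
    mem_closure_iff.1 (mem_closure_orbit_symm_of_upperHemicontinuous h hy) _ isOpen_interior
      (mem_interior_iff_mem_nhds.2 hU)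
  obtain ⟨F, hF⟩ :=
    exists_finset_subset_iUnion_preimage_smul (hcompact x) isOpen_interior hreturn
  have hnear := h.forall_isOpen x _
    (isOpen_biUnion fun f _ ↦ isOpen_interior.preimage (continuous_const_smul f)) hF
  refine ⟨F, _, hnear, fun g v hv ↦ ?_⟩
  obtain ⟨f, hf, hfU⟩ := Set.mem_iUnion₂.1 (hv (subset_closure (MulAction.mem_orbit v g)))
  exact ⟨f, hf, interior_subset hfU⟩

theorem statement19_general [R1Space X] [WeaklyLocallyCompactSpace X] :
    IsLocallyWeaklyAlmostPeriodic G X ↔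
      (∀ x : X, IsCompact (closure (MulAction.orbit G x))) ∧
        UpperHemicontinuous fun x : X ↦ closure (MulAction.orbit G x) :=
  ⟨fun h ↦ ⟨h.isCompact_closure_orbit, h.upperHemicontinuous_closure_orbit⟩,
    fun h ↦ isLocallyWeaklyAlmostPeriodic_of_upperHemicontinuous h.1 h.2⟩

end Action

/-- a flow `(G,X)` is locally weakly almost periodic with `G` discrete
iff the orbit closure mapping `x ↦ closure (G • x)` is upper semicontinuous. -/
theorem statement19 {G X : Type} [Group G] [TopologicalSpace G] [T2Space G]
    [ContinuousMul G] [UniformSpace X] [T2Space X] [LocallyCompactSpace X]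
    [MulAction G X] [ContinuousSMul G X]
    (hLag : ∀ x : X, IsCompact (closure (MulAction.orbit G x))) :
    (∀ x : X, ∀ U ∈ 𝓝 x, ∃ F : Finset G, ∃ V ∈ 𝓝 x,
        ∀ g : G, ∀ v ∈ V, ∃ f ∈ F, f • g • v ∈ U) ↔
      (∀ (x : X) (U : Set X), IsOpen U → closure (MulAction.orbit G x) ⊆ U →
        ∃ V ∈ 𝓝 x, ∀ y ∈ V, closure (MulAction.orbit G y) ⊆ U) := by
  simp only [← eventually_iff_exists_mem, ← upperHemicontinuous_iff_forall_isOpen]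
  exact statement19_general.trans (and_iff_right hLag)
end
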